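/- Fix a > 0, suppose f(t) ≥ 0 for all t ∈ (0,a), let m(t) := min{f(s) : t ≤ s ≤ a} for t ∈ [0,a], and set C := {t ∈ [0,a] : f(t) = m(t)}. Then ξ{s ∈ C : τ(s) ≤ a} = η(C) = 0. -/

import Mathlib

open MeasureTheory

/-- The function `f(t) = ξ[0,t] − η[0,t]` for `t ≥ 0` and `f(t) = η[t,0] − ξ[t,0]` for `t < 0`. -/
noncomputable def fdiff (ξ η : Measure ℝ) (t : ℝ) : ℝ :=
  if 0 ≤ t then (ξ (Set.Icc 0 t)).toReal - (η (Set.Icc 0 t)).toReal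
  else (η (Set.Icc t 0)).toReal - (ξ (Set.Icc t 0)).toReal

/-- `τ(s) = inf {t > s : ξ[s,t] = η[s,t]}`, with values in `(−∞,∞]` (i.e. `EReal`),
`inf ∅ = ∞`. -/
noncomputable def tauE (ξ η : Measure ℝ) (s : ℝ) : EReal :=
  sInf {x : EReal | ∃ t : ℝ, s < t ∧ ξ (Set.Icc s t) = η (Set.Icc s t) ∧ x = (t : EReal)}

/-- The backwards running minimum `m(t) = min {f(s) : t ≤ s ≤ a}`. -/
noncomputable def runMin (ξ η : Measure ℝ) (a t : ℝ) : ℝ :=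
  sInf (fdiff ξ η '' Set.Icc t a)

/-!
On every interval, `ξ[s,t] ≤ η[s,t]` if and only if `f(t) ≤ f(s)`. Hence a set `A` on which `f` is
antitone satisfies `ξ(A ∩ I) ≤ η(I)` for all compact intervals `I`, and by differentiation of
measures this is compatible with `ξ ⟂ η` only if `ξ(A) = 0`; symmetrically, `η(A) = 0` if `f` is
monotone on `A`. Now `f` is monotone on `C`, so `η(C) = 0`. If moreover `τ(s) ≤ a`, then `f` returns
to the value `f(s)` before time `a`. Those `s ∈ C` for which a given rational number separates `s`
from such a return time form a set on which `f` is also antitone, and the countably many sets of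
this kind cover `{s ∈ C : τ(s) ≤ a}` up to the point `a`.
-/

open Set Filter Topology

section ClosedBalls

variable {β : Type*} [MetricSpace β] [SecondCountableTopology β] [HasBesicovitchCovering β]
  [MeasurableSpace β] [BorelSpace β] {μ ν : Measure β} [IsLocallyFiniteMeasure μ]
  [IsLocallyFiniteMeasure ν]

theorem eq_zero_of_mutuallySingular_of_closedBall_le (hμν : μ ⟂ₘ ν)
    (hle : ∀ x r, μ (Metric.closedBall x r) ≤ ν (Metric.closedBall x r)) : μ = 0 := by
  let v := Besicovitch.vitaliFamily μ
  rw [← ae_eq_bot, ← eventually_false_iff_eq_bot]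
  filter_upwards [v.ae_eventually_measure_zero_of_singular hμν.symm, v.ae_eventually_measure_pos]
    with x hratio hpos
  have hballs := Besicovitch.tendsto_filterAt μ x
  obtain ⟨r, hr_ratio, hr_pos, hr_top⟩ :=
    ((hballs.eventually (hratio.eventually_lt_const one_pos)).and
      ((hballs.eventually hpos).and (hballs.eventually (v.eventually_measure_lt_top x)))).exists
  rw [ENNReal.div_lt_iff (.inl hr_pos.ne') (.inl hr_top.ne), one_mul] at hr_ratio
  exact hr_ratio.not_ge (hle x r)

end ClosedBalls

section Order

theorem antitoneOn_closure {α β : Type*} [LinearOrder α] [TopologicalSpace α]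
    [OrderClosedTopology α] [Preorder β] [TopologicalSpace β] [OrderClosedTopology β]
    {f : α → β} {s : Set α} (hf : Continuous f) (hs : AntitoneOn f s) :
    AntitoneOn f (closure s) := by
  have hclosed : IsClosed {p : α × α | f (max p.1 p.2) ≤ f (min p.1 p.2)} :=
    isClosed_le (by fun_prop) (by fun_prop)
  have hsub : s ×ˢ s ⊆ {p : α × α | f (max p.1 p.2) ≤ f (min p.1 p.2)} := by
    rintro ⟨x, y⟩ ⟨hx, hy⟩
    exact hs (min_rec' (· ∈ s) hx hy) (max_rec' (· ∈ s) hx hy) min_le_max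
  intro x hx y hy hxy
  have hmem : (x, y) ∈ closure (s ×ˢ s) := by
    rw [closure_prod_eq]
    exact mk_mem_prod hx hy
  simpa only [mem_ofPred_eq, max_eq_right hxy, min_eq_left hxy]
    using closure_minimal hsub hclosed hmem

variable {α β : Type*} [Preorder α] [Preorder β]

/-- The points `s ≤ a` at which `f` attains its minimum over `[s, a]`; for `f = fdiff ξ η` this is
the set `C`, extended from `[0, a]` to `(-∞, a]`. -/
def futureMinSet (f : α → β) (a : α) : Set α :=
  {s ∈ Iic a | IsMinOn f (Icc s a) s}

/-- The points of `futureMinSet f a` before `r` whose `f`-value is attained again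
during `[r, a]`. -/
def futureMinReturnSet (f : α → β) (a r : α) : Set α :=
  {s ∈ futureMinSet f a | s < r ∧ ∃ t ∈ Icc r a, f t = f s}

theorem monotoneOn_futureMinSet (f : α → β) (a : α) : MonotoneOn f (futureMinSet f a) :=
  fun _ hs _ ht hst => hs.2 ⟨hst, ht.1⟩

theorem antitoneOn_futureMinReturnSet (f : α → β) (a r : α) :
    AntitoneOn f (futureMinReturnSet f a r) := by
  rintro s ⟨-, -, u, ⟨hru, hua⟩, hu⟩ t ⟨ht, htr, -⟩ -
  exact hu ▸ ht.2 ⟨htr.le.trans hru, hua⟩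

theorem eq_sInf_image_Icc_iff_isMinOn {γ : Type*} [ConditionallyCompleteLattice γ] {f : α → γ}
    {s a : α} (hsa : s ≤ a) (hbdd : BddBelow (f '' Icc s a)) :
    f s = sInf (f '' Icc s a) ↔ IsMinOn f (Icc s a) s := by
  refine ⟨fun h t ht => ?_, fun h => ?_⟩
  · exact h.trans_le (csInf_le hbdd (mem_image_of_mem f ht))
  · have hleast : IsLeast (f '' Icc s a) (f s) :=
      ⟨mem_image_of_mem f (left_mem_Icc.2 hsa), forall_mem_image.2 h⟩
    exact hleast.csInf_eq.symm

end Order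

section Fdiff

variable {ξ η : Measure ℝ}

theorem fdiff_swap (ξ η : Measure ℝ) : fdiff η ξ = -fdiff ξ η := by
  ext t
  simp only [fdiff, Pi.neg_apply]
  split_ifs <;> ring

variable [NullSingletonClass ξ] [NullSingletonClass η]

theorem fdiff_eq_intervalIntegral (t : ℝ) :
    fdiff ξ η t = (∫ _ in 0..t, (1 : ℝ) ∂ξ) - ∫ _ in 0..t, (1 : ℝ) ∂η := by
  simp only [fdiff, intervalIntegral.integral_const', measureReal_def, smul_eq_mul, mul_one,
    measure_congr Ioc_ae_eq_Icc]
  split_ifs with ht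
  · rcases ht.eq_or_lt with rfl | ht
    · simp
    · simp [Icc_eq_empty ht.not_ge]
  · rw [Icc_eq_empty ht, measure_empty, measure_empty, ENNReal.toReal_zero]
    ring

variable [IsLocallyFiniteMeasure ξ] [IsLocallyFiniteMeasure η]

theorem continuous_fdiff : Continuous (fdiff ξ η) := by
  simp only [funext fdiff_eq_intervalIntegral]
  exact (intervalIntegral.continuous_primitive (fun _ _ => intervalIntegrable_const) 0).sub
    (intervalIntegral.continuous_primitive (fun _ _ => intervalIntegrable_const) 0)

theorem fdiff_sub_fdiff {s t : ℝ} (hst : s ≤ t) :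
    fdiff ξ η t - fdiff ξ η s = ξ.real (Icc s t) - η.real (Icc s t) := by
  have hincr (μ : Measure ℝ) [IsLocallyFiniteMeasure μ] [NullSingletonClass μ] :
      (∫ _ in 0..t, (1 : ℝ) ∂μ) - ∫ _ in 0..s, (1 : ℝ) ∂μ = μ.real (Icc s t) := by
    rw [intervalIntegral.integral_interval_sub_left intervalIntegrable_const
      intervalIntegrable_const, intervalIntegral.integral_of_le hst, setIntegral_const,
      smul_eq_mul, mul_one, measureReal_congr Ioc_ae_eq_Icc]
  rw [← hincr ξ, ← hincr η, fdiff_eq_intervalIntegral, fdiff_eq_intervalIntegral]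
  ring

theorem measure_Icc_le_iff_fdiff_le {s t : ℝ} (hst : s ≤ t) :
    ξ (Icc s t) ≤ η (Icc s t) ↔ fdiff ξ η t ≤ fdiff ξ η s := by
  rw [← ENNReal.toReal_le_toReal measure_Icc_lt_top.ne measure_Icc_lt_top.ne, ← measureReal_def,
    ← measureReal_def, ← sub_nonpos, ← fdiff_sub_fdiff hst, sub_nonpos]

theorem fdiff_eq_of_measure_Icc_eq {s t : ℝ} (hst : s ≤ t) (h : ξ (Icc s t) = η (Icc s t)) :
    fdiff ξ η t = fdiff ξ η s := by
  rw [← sub_eq_zero, fdiff_sub_fdiff hst, measureReal_def, measureReal_def, h, sub_self]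

theorem measure_inter_Icc_le_of_antitoneOn_fdiff {A : Set ℝ} (hA : AntitoneOn (fdiff ξ η) A)
    (b c : ℝ) : ξ (A ∩ Icc b c) ≤ η (Icc b c) := by
  rcases (A ∩ Icc b c).eq_empty_or_nonempty with hempty | hne
  · simp [hempty]
  have hbelow : BddBelow (A ∩ Icc b c) := bddBelow_Icc.mono inter_subset_right
  have habove : BddAbove (A ∩ Icc b c) := bddAbove_Icc.mono inter_subset_right
  have hle : sInf (A ∩ Icc b c) ≤ sSup (A ∩ Icc b c) := csInf_le_csSup hne hbelow habove
  calc ξ (A ∩ Icc b c)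
      ≤ ξ (Icc (sInf (A ∩ Icc b c)) (sSup (A ∩ Icc b c))) :=
        measure_mono (subset_Icc_csInf_csSup hbelow habove)
    _ ≤ η (Icc (sInf (A ∩ Icc b c)) (sSup (A ∩ Icc b c))) :=
        (measure_Icc_le_iff_fdiff_le hle).2 <|
          antitoneOn_closure continuous_fdiff (hA.mono inter_subset_left)
            (csInf_mem_closure hne hbelow) (csSup_mem_closure hne habove) hle
    _ ≤ η (Icc b c) := measure_mono <|
        Icc_subset_Icc (le_csInf hne fun _ hx => hx.2.1) (csSup_le hne fun _ hx => hx.2.2)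

theorem measure_eq_zero_of_antitoneOn_fdiff (hsing : ξ ⟂ₘ η) {A : Set ℝ}
    (hA : AntitoneOn (fdiff ξ η) A) : ξ A = 0 := by
  rw [← Measure.restrict_eq_zero]
  refine eq_zero_of_mutuallySingular_of_closedBall_le (hsing.restrict A) fun x r => ?_
  rw [Measure.restrict_apply measurableSet_closedBall, inter_comm, Real.closedBall_eq_Icc]
  exact measure_inter_Icc_le_of_antitoneOn_fdiff hA _ _

theorem measure_eq_zero_of_monotoneOn_fdiff (hsing : ξ ⟂ₘ η) {A : Set ℝ}
    (hA : MonotoneOn (fdiff ξ η) A) : η A = 0 :=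
  measure_eq_zero_of_antitoneOn_fdiff hsing.symm (fdiff_swap ξ η ▸ hA.neg)

theorem setOf_fdiff_eq_runMin (a : ℝ) :
    {t ∈ Iic a | fdiff ξ η t = runMin ξ η a t} = futureMinSet (fdiff ξ η) a := by
  ext t
  exact and_congr_right fun hta => eq_sInf_image_Icc_iff_isMinOn hta
    (isCompact_Icc.image continuous_fdiff).bddBelow

theorem exists_fdiff_eq_of_tauE_le {s a : ℝ} (hsa : s < a) (hτ : tauE ξ η s ≤ a) :
    ∃ t ∈ Ioc s a, fdiff ξ η t = fdiff ξ η s := by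
  by_contra! hno
  have hreturn : ∃ᶠ t in 𝓝[>] a, fdiff ξ η t = fdiff ξ η s := by
    rw [(nhdsGT_basis a).frequently_iff]
    intro b hab
    obtain ⟨_, ⟨t, hst, ht, rfl⟩, htb⟩ :=
      sInf_lt_iff.1 (hτ.trans_lt (EReal.coe_lt_coe_iff.2 hab))
    have hft := fdiff_eq_of_measure_Icc_eq hst.le ht
    have hat : a < t := lt_of_not_ge fun hta => hno t ⟨hst, hta⟩ hft
    exact ⟨t, ⟨hat, EReal.coe_lt_coe_iff.1 htb⟩, hft⟩
  have hclosed : IsClosed {t | fdiff ξ η t = fdiff ξ η s} :=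
    isClosed_eq continuous_fdiff continuous_const
  exact hno a ⟨hsa, le_rfl⟩
    (hclosed.mem_of_frequently_of_tendsto hreturn (tendsto_id.mono_left nhdsWithin_le_nhds))

theorem futureMinSet_inter_tauE_le_subset (a : ℝ) :
    {s ∈ futureMinSet (fdiff ξ η) a | tauE ξ η s ≤ a} ⊆
      {a} ∪ ⋃ r : ℚ, futureMinReturnSet (fdiff ξ η) a r := by
  rintro s ⟨hs, hτ⟩
  rcases (mem_Iic.1 hs.1).eq_or_lt with rfl | hsa
  · exact .inl rfl
  · obtain ⟨t, ⟨hst, hta⟩, ht⟩ := exists_fdiff_eq_of_tauE_le hsa hτ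
    obtain ⟨r, hsr, hrt⟩ := exists_rat_btwn hst
    exact .inr (mem_iUnion.2 ⟨r, hs, hsr, t, ⟨hrt.le, hta⟩, ht⟩)

theorem rest_balance_general (hsing : ξ ⟂ₘ η) (a : ℝ) :
    ξ {s ∈ {t ∈ Iic a | fdiff ξ η t = runMin ξ η a t} | tauE ξ η s ≤ (a : EReal)} = 0 ∧
      η {t ∈ Iic a | fdiff ξ η t = runMin ξ η a t} = 0 := by
  rw [setOf_fdiff_eq_runMin]
  have hreturn (r : ℚ) : ξ (futureMinReturnSet (fdiff ξ η) a r) = 0 :=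
    measure_eq_zero_of_antitoneOn_fdiff hsing (antitoneOn_futureMinReturnSet _ a r)
  exact ⟨measure_mono_null (futureMinSet_inter_tauE_le_subset a)
      (measure_union_null (measure_singleton a) (measure_iUnion_null hreturn)),
    measure_eq_zero_of_monotoneOn_fdiff hsing (monotoneOn_futureMinSet _ a)⟩

end Fdiff

/-- with `C = {t ∈ [0,a] : f(t) = m(t)}` one has
`ξ{s ∈ C : τ(s) ≤ a} = η(C) = 0`. -/
theorem rest_balance (ξ η : Measure ℝ)
    [IsLocallyFiniteMeasure ξ] [IsLocallyFiniteMeasure η]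
    (hξd : ∀ x : ℝ, ξ {x} = 0) (hηd : ∀ x : ℝ, η {x} = 0)
    (hsing : ξ.MutuallySingular η)
    (a : ℝ) (ha : 0 < a) (hf : ∀ t ∈ Set.Ioo 0 a, 0 ≤ fdiff ξ η t) :
    ξ {s ∈ {t ∈ Set.Icc 0 a | fdiff ξ η t = runMin ξ η a t} | tauE ξ η s ≤ (a : EReal)}
        = η {t ∈ Set.Icc 0 a | fdiff ξ η t = runMin ξ η a t} ∧
      η {t ∈ Set.Icc 0 a | fdiff ξ η t = runMin ξ η a t} = 0 := by
  have : NullSingletonClass ξ := ⟨hξd⟩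
  have : NullSingletonClass η := ⟨hηd⟩
  obtain ⟨hξ, hη⟩ := rest_balance_general hsing a
  have hsub : {t ∈ Icc 0 a | fdiff ξ η t = runMin ξ η a t} ⊆
      {t ∈ Iic a | fdiff ξ η t = runMin ξ η a t} := fun _ ht => ⟨ht.1.2, ht.2⟩
  rw [measure_mono_null hsub hη]
  exact ⟨measure_mono_null (inter_subset_inter_left _ hsub) hξ, rfl⟩
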